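/- Coupling of well labelled and embedded trees: there exists a joint distribution on pairs (W, U) of a uniform random well labelled tree W with n edges and a uniform random embedded tree U with n edges, such that almost surely the cumulated label distributions satisfy Λ̂_{k-2}(U) ≤ λ̂_k(W) ≤ Λ̂_{k+2}(U) for all k ≥ 1, and in particular |μ(W) - (M(U) - m(U))| ≤ 3, where μ(W) is the maximal label of W and m(U), M(U) are the minimal and maximal labels of U. -/

import Mathlib

open scoped Classical

/-- Rooted plane trees with integer labels on vertices. -/
inductive LTree : Type
  | node : ℤ → List LTree → LTree

namespace LTree

/-- The label of the root. -/
def label : LTree → ℤ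
  | .node v _ => v

mutual
  /-- Number of edges of a labelled plane tree. -/
  def numEdges : LTree → ℕ
    | .node _ ts => numEdgesL ts
  def numEdgesL : List LTree → ℕ
    | [] => 0
    | t :: r => numEdges t + 1 + numEdgesL r
end

mutual
  /-- The labels of two adjacent vertices differ by at most 1. -/
  def Good : LTree → Prop
    | .node v ts => GoodL v ts
  def GoodL : ℤ → List LTree → Prop
    | _, [] => True
    | v, t :: r => |label t - v| ≤ 1 ∧ Good t ∧ GoodL v r
end

mutual
  /-- The multiset of all vertex labels. -/
  def labels : LTree → Multiset ℤ
    | .node v ts => v ::ₘ labelsL ts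
  def labelsL : List LTree → Multiset ℤ
    | [] => 0
    | t :: r => labels t + labelsL r
end

/-- The minimal vertex label. -/
noncomputable def minLabel (T : LTree) : ℤ := sInf {v : ℤ | v ∈ T.labels}

/-- The maximal vertex label. -/
noncomputable def maxLabel (T : LTree) : ℤ := sSup {v : ℤ | v ∈ T.labels}

/-- The number of vertices with label at most `x`. -/
def countLE (T : LTree) (x : ℤ) : ℕ := ((T.labels).filter (fun v => v ≤ x)).card

end LTree

/-- Well labelled trees with `n` edges. -/
def WLTrees (n : ℕ) : Set LTree :=
  {T | T.Good ∧ (∀ v ∈ T.labels, 1 ≤ v) ∧ T.label = 1 ∧ T.numEdges = n}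

/-- Embedded trees (unconstrained well labelled trees) with `n` edges. -/
def EmbTrees (n : ℕ) : Set LTree :=
  {T | T.Good ∧ T.label = 1 ∧ T.numEdges = n}

/-!
Embedded trees with `n` edges are encoded by blossom trees with `n` inner nodes, each carrying a
bud, and `n + 2` leaves. Walking around a blossom tree, up by one at each bud and down by one at
each leaf, the heights of the leaves are the labels of the embedded tree. Moving the root to
another leaf shifts this walk cyclically, and by the cycle lemma exactly two of the `n + 2` leaves
give a tree with positive heights, that is, a well labelled tree. Hence a uniform embedded tree `U`
rerooted at one of its two good leaves is a uniform well labelled tree `W`. If the new root leaf has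
height `x`, the heights change by `-x` or `2 - x`; since `x` is within one of the minimal label of
`U`, the two label counts are interlaced with a shift of two.
-/

section UniformCoupling

open Finset

variable {ω α β : Type*} [DecidableEq α] [DecidableEq β]

/-- The law of `F q` when `q` is uniform on the finite set `Ω`. -/
noncomputable def uniformLaw (Ω : Finset ω) (F : ω → α) (x : α) : ℚ :=
  #{q ∈ Ω | F q = x} / #Ω

theorem uniformLaw_pos {Ω : Finset ω} {F : ω → α} {x : α} (hx : x ∈ Ω.image F) :
    0 < uniformLaw Ω F x := by
  obtain ⟨q, hq, rfl⟩ := mem_image.1 hx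
  have hfiber : 0 < #{q' ∈ Ω | F q' = F q} := card_pos.2 ⟨q, mem_filter.2 ⟨hq, rfl⟩⟩
  have hΩ : 0 < #Ω := card_pos.2 ⟨q, hq⟩
  unfold uniformLaw
  positivity

theorem sum_filter_uniformLaw (Ω : Finset ω) (F : ω → α) (P : α → Prop) [DecidablePred P] :
    ∑ x ∈ Ω.image F with P x, uniformLaw Ω F x = #{q ∈ Ω | P (F q)} / #Ω := by
  have hcard : ∑ x ∈ Ω.image F with P x, #{q ∈ Ω | F q = x} = #{q ∈ Ω | P (F q)} := by
    rw [sum_card_fiberwise_eq_card_filter]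
    congr 1
    refine filter_congr fun q hq => ?_
    simp only [mem_filter, mem_image_of_mem F hq, true_and]
  simp only [uniformLaw, ← sum_div, ← hcard, Nat.cast_sum]

theorem sum_uniformLaw {Ω : Finset ω} (hΩ : Ω.Nonempty) (F : ω → α) :
    ∑ x ∈ Ω.image F, uniformLaw Ω F x = 1 := by
  have hsum := sum_filter_uniformLaw Ω F (fun _ => True)
  simp only [filter_true] at hsum
  rw [hsum, div_self (Nat.cast_ne_zero.2 hΩ.card_ne_zero)]

theorem card_fiber_div_card_eq_inv_ncard {Ω : Finset ω} {f : ω → α} {A : Set α} {c : ℕ}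
    (hc : c ≠ 0) (hf : Set.MapsTo f Ω A) (hfiber : ∀ a ∈ A, #{q ∈ Ω | f q = a} = c)
    {a : α} (ha : a ∈ A) : (#{q ∈ Ω | f q = a} : ℚ) / #Ω = (A.ncard : ℚ)⁻¹ := by
  have hA : A = Ω.image f := by
    refine Set.Subset.antisymm (fun a ha => ?_) (by simpa using hf.image_subset)
    obtain ⟨q, hq⟩ := card_ne_zero.1 ((hfiber a ha).trans_ne hc)
    exact mem_coe.2 (mem_image.2 ⟨q, mem_filter.1 hq⟩)
  have hcard : #Ω = A.ncard * c := by
    rw [card_eq_sum_card_image f Ω, sum_congr rfl fun b hb => hfiber b (hA ▸ mem_coe.2 hb),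
      sum_const, smul_eq_mul, hA, Set.ncard_coe_finset]
  rw [hfiber a ha, hcard, Nat.cast_mul, div_mul_cancel_right₀ (Nat.cast_ne_zero.2 hc)]

theorem exists_coupling_of_card_fiber_eq {Ω : Finset ω} (hΩ : Ω.Nonempty)
    {f : ω → α} {g : ω → β} {A : Set α} {B : Set β} {c d : ℕ} (hc : c ≠ 0) (hd : d ≠ 0)
    (hf : Set.MapsTo f Ω A) (hg : Set.MapsTo g Ω B)
    (hfA : ∀ a ∈ A, #{q ∈ Ω | f q = a} = c) (hgB : ∀ b ∈ B, #{q ∈ Ω | g q = b} = d) :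
    ∃ (S : Finset (α × β)) (p : α × β → ℚ),
      (∀ x ∈ S, 0 < p x) ∧ (∑ x ∈ S, p x = 1) ∧ (∀ x ∈ S, ∃ q ∈ Ω, (f q, g q) = x) ∧
      (∀ a ∈ A, ∑ x ∈ S with x.1 = a, p x = (A.ncard : ℚ)⁻¹) ∧
      (∀ b ∈ B, ∑ x ∈ S with x.2 = b, p x = (B.ncard : ℚ)⁻¹) := by
  refine ⟨Ω.image fun q => (f q, g q), uniformLaw Ω fun q => (f q, g q),
    fun x => uniformLaw_pos, sum_uniformLaw hΩ _, fun x => mem_image.1, fun a ha => ?_,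
    fun b hb => ?_⟩
  · rw [sum_filter_uniformLaw Ω _ fun x : α × β => x.1 = a]
    exact card_fiber_div_card_eq_inv_ncard hc hf hfA ha
  · rw [sum_filter_uniformLaw Ω _ fun x : α × β => x.2 = b]
    exact card_fiber_div_card_eq_inv_ncard hd hg hgB hb

end UniformCoupling

section CycleLemma

open Finset

variable {ι : Type*} [LinearOrder ι]

/-- The records of the cycle lemma. If the sequence `g` on `s` is continued periodically with a drop
of `r` per turn, then `g j` is smaller than the `#s - 1` terms preceding it: those before `j` in the
same turn, and those after `j` in the previous turn, which lie `r` higher. -/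
def IsRecordCut (s : Finset ι) (g : ι → ℤ) (r : ℕ) (j : ι) : Prop :=
  (∀ i ∈ s, i < j → g j < g i) ∧ ∀ i ∈ s, j < i → g j < g i + r

theorem injOn_isRecordCut (s : Finset ι) (g : ι → ℤ) (r : ℕ) :
    Set.InjOn g ({j ∈ s | IsRecordCut s g r j} : Finset ι) := by
  intro i hi j hj hij
  obtain ⟨hi, hi'⟩ := mem_filter.1 (mem_coe.1 hi)
  obtain ⟨hj, hj'⟩ := mem_filter.1 (mem_coe.1 hj)
  rcases lt_trichotomy i j with h | h | h
  · exact absurd hij (hj'.1 i hi h).ne'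
  · exact h
  · exact absurd hij (hi'.1 j hj h).ne

theorem IsRecordCut.lt_add {s : Finset ι} {g : ι → ℤ} {r : ℕ} {j : ι} (hj : IsRecordCut s g r j)
    (hr : 0 < r) {i : ι} (hi : i ∈ s) : g j < g i + r := by
  rcases lt_trichotomy i j with h | rfl | h
  · have := hj.1 i hi h
    omega
  · omega
  · exact hj.2 i hi h

-- The cuts are the first passages at the `r` lowest levels.
theorem exists_isRecordCut_of_skipFree {s : Finset ι} {g : ι → ℤ} {c v : ℤ} {r : ℕ}
    (hskip : ∀ j ∈ s, ∀ y, g j < y → y ≤ c → ∃ i ∈ s, i < j ∧ g i = y)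
    (hvc : v ≤ c) (hle : ∃ i ∈ s, g i ≤ v) (hlow : ∀ i ∈ s, v < g i + r) :
    ∃ j ∈ s, IsRecordCut s g r j ∧ g j = v := by
  obtain ⟨j, hj⟩ : ∃ j, Minimal (fun i => i ∈ s.filter (g · ≤ v)) j := by
    obtain ⟨i, hi, hiv⟩ := hle
    exact exists_minimal ⟨i, mem_filter.2 ⟨hi, hiv⟩⟩
  obtain ⟨hjs, hjv⟩ := mem_filter.1 hj.prop
  have hfirst : ∀ i ∈ s, i < j → v < g i := fun i hi hij =>
    lt_of_not_ge fun hiv => hj.not_lt (mem_filter.2 ⟨hi, hiv⟩) hij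
  have hgj : g j = v := by
    by_contra hne
    obtain ⟨i, hi, hij, hiv⟩ := hskip j hjs v (lt_of_le_of_ne hjv hne) hvc
    exact (hfirst i hi hij).ne' hiv
  exact ⟨j, hjs, ⟨fun i hi hij => hgj ▸ hfirst i hi hij, fun i hi _ => hgj ▸ hlow i hi⟩, hgj⟩

theorem card_isRecordCut {s : Finset ι} {g : ι → ℤ} {c : ℤ} {r : ℕ} (hr : 0 < r)
    (hlow : ∃ j ∈ s, g j + r ≤ c + 1)
    (hskip : ∀ j ∈ s, ∀ y, g j < y → y ≤ c → ∃ i ∈ s, i < j ∧ g i = y) :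
    #{j ∈ s | IsRecordCut s g r j} = r := by
  obtain ⟨j₀, hj₀, hj₀c⟩ := hlow
  obtain ⟨m, hm, hmin⟩ := s.exists_min_image g ⟨j₀, hj₀⟩
  have himage : image g {j ∈ s | IsRecordCut s g r j} = Ico (g m) (g m + r) := by
    ext v
    simp only [mem_image, mem_filter, mem_Ico, and_assoc]
    constructor
    · rintro ⟨j, hj, hcut, rfl⟩
      exact ⟨hmin j hj, hcut.lt_add hr hm⟩
    · rintro ⟨hmv, hvm⟩
      have := hmin j₀ hj₀
      exact exists_isRecordCut_of_skipFree hskip (by omega) ⟨m, hm, hmv⟩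
        fun i hi => hvm.trans_le (by simpa using hmin i hi)
  rw [← card_image_of_injOn (injOn_isRecordCut s g r), himage]
  simp

end CycleLemma

section ListLemmas

variable {α : Type*}

theorem append_eq_append_cons_cases {p q a b : List α} {x : α} (h : p ++ q = a ++ x :: b) :
    (∃ c, p = a ++ x :: c) ∨ ∃ a', a = p ++ a' ∧ q = a' ++ x :: b := by
  rcases List.append_eq_append_iff.1 h with ⟨a', ha, hq⟩ | ⟨_ | ⟨y, c⟩, hp, hxb⟩
  · exact .inr ⟨a', ha, hq⟩
  · exact .inr ⟨[], by simpa using hp.symm, by simpa using hxb.symm⟩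
  · obtain ⟨rfl, -⟩ := List.cons.inj hxb
    exact .inl ⟨c, hp⟩

theorem eq_take_append_getD_cons_drop {l : List α} {j : ℕ} (hj : j < l.length) (d : α) :
    l = l.take j ++ l.getD j d :: l.drop (j + 1) := by
  rw [List.getD_eq_getElem l d hj, List.getElem_cons_drop, List.take_append_drop]

theorem forall_mem_take_iff_getD {l : List α} {j : ℕ} (hj : j ≤ l.length) (d : α)
    (P : α → Prop) : (∀ y ∈ l.take j, P y) ↔ ∀ i < j, P (l.getD i d) := by
  simp only [List.mem_take_iff_getElem, lt_min_iff]
  constructor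
  · intro h i hi
    rw [List.getD_eq_getElem l d (hi.trans_le hj)]
    exact h _ ⟨i, ⟨hi, hi.trans_le hj⟩, rfl⟩
  · rintro h _ ⟨i, ⟨hi, hil⟩, rfl⟩
    simpa only [List.getD_eq_getElem l d hil] using h i hi

theorem forall_mem_drop_iff_getD (l : List α) (j : ℕ) (d : α) (P : α → Prop) :
    (∀ y ∈ l.drop j, P y) ↔ ∀ i, j ≤ i → i < l.length → P (l.getD i d) := by
  simp only [List.mem_drop_iff_getElem]
  constructor
  · intro h i hji hil
    rw [List.getD_eq_getElem l d hil]
    exact h _ ⟨i - j, by omega, by simp only [Nat.add_sub_cancel' hji]⟩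
  · rintro h _ ⟨i, hi, rfl⟩
    have hji : j + i < l.length := by omega
    simpa only [List.getD_eq_getElem l d hji] using h (j + i) (Nat.le_add_right j i) hji

theorem countP_le_mono (l : List ℤ) {y z : ℤ} (hyz : y ≤ z) :
    l.countP (· ≤ y) ≤ l.countP (· ≤ z) :=
  List.countP_mono_left fun v _ hv => by simp only [decide_eq_true_eq] at hv ⊢; omega

theorem countP_le_lt_countP_le {l : List ℤ} {v y z : ℤ} (hv : v ∈ l) (hyv : y < v) (hvz : v ≤ z) :
    l.countP (· ≤ y) < l.countP (· ≤ z) := by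
  have hmono := countP_le_mono (l.erase v) (hyv.le.trans hvz)
  rw [(List.perm_cons_erase hv).countP_eq, (List.perm_cons_erase hv).countP_eq]
  simp only [List.countP_cons, decide_eq_true_eq, hvz, hyv.not_ge, if_true, if_false]
  omega

end ListLemmas

namespace LTree

theorem label_mem_labels (T : LTree) : T.label ∈ T.labels := by
  obtain ⟨v, ts⟩ := T
  simp [label, labels]

theorem finite_setOf_mem_labels (T : LTree) : {v : ℤ | v ∈ T.labels}.Finite :=
  T.labels.toFinset.finite_toSet.subset fun _ hv => by simpa using hv

theorem isLeast_minLabel (T : LTree) : IsLeast {v : ℤ | v ∈ T.labels} T.minLabel :=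
  have hbdd := T.finite_setOf_mem_labels.bddBelow
  ⟨Int.csInf_mem ⟨_, T.label_mem_labels⟩ hbdd, fun _ hv => csInf_le hbdd hv⟩

theorem isGreatest_maxLabel (T : LTree) : IsGreatest {v : ℤ | v ∈ T.labels} T.maxLabel :=
  have hbdd := T.finite_setOf_mem_labels.bddAbove
  ⟨Int.csSup_mem ⟨_, T.label_mem_labels⟩ hbdd, fun _ hv => le_csSup hbdd hv⟩

theorem countLE_le_card (T : LTree) (x : ℤ) : T.countLE x ≤ T.labels.card :=
  Multiset.card_le_card (Multiset.filter_le _ _)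

theorem countLE_eq_card_iff {T : LTree} {x : ℤ} : T.countLE x = T.labels.card ↔ T.maxLabel ≤ x := by
  rw [countLE, ← Multiset.countP_eq_card_filter, Multiset.countP_eq_card]
  exact ⟨fun h => h _ T.isGreatest_maxLabel.1, fun h v hv => (T.isGreatest_maxLabel.2 hv).trans h⟩

theorem abs_maxLabel_sub_le {W U : LTree} {c : ℤ} (hc : 0 ≤ c)
    (hcard : W.labels.card = U.labels.card) (hW : 1 ≤ W.maxLabel)
    (hcount : ∀ k : ℤ, 1 ≤ k → U.countLE (U.minLabel + (k - c) - 1) ≤ W.countLE k ∧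
      W.countLE k ≤ U.countLE (U.minLabel + (k + c) - 1)) :
    |W.maxLabel - (U.maxLabel - U.minLabel)| ≤ c + 1 := by
  have hmin_le_max : U.minLabel ≤ U.maxLabel := U.isLeast_minLabel.2 U.isGreatest_maxLabel.1
  have hlower : U.maxLabel ≤ U.minLabel + (W.maxLabel + c) - 1 := by
    have hle := (hcount _ hW).2
    rw [countLE_eq_card_iff.2 le_rfl, hcard] at hle
    exact countLE_eq_card_iff.1 ((U.countLE_le_card _).antisymm hle)
  have hupper : W.maxLabel ≤ U.maxLabel - U.minLabel + c + 1 := by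
    have hle := (hcount (U.maxLabel - U.minLabel + c + 1) (by omega)).1
    rw [countLE_eq_card_iff.2 (by omega), ← hcard] at hle
    exact countLE_eq_card_iff.1 ((W.countLE_le_card _).antisymm hle)
  rw [abs_le]
  omega

end LTree

theorem finite_setOf_numNodes_le (α : Type*) [Finite α] (n : ℕ) :
    {t : BinaryTree α | t.numNodes ≤ n}.Finite := by
  induction n with
  | zero =>
    refine (Set.finite_singleton .nil).subset fun t ht => ?_
    cases t with
    | nil => rfl
    | node => simp at ht
  | succ n ih =>
    refine (((Set.finite_univ.prod (ih.prod ih)).image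
      fun q : α × BinaryTree α × BinaryTree α => .node q.1 q.2.1 q.2.2).insert .nil).subset
      fun t ht => ?_
    cases t with
    | nil => exact Set.mem_insert _ _
    | node a l r =>
      have hlr : l.numNodes + r.numNodes + 1 ≤ n + 1 := ht
      refine Set.mem_insert_of_mem _ ⟨(a, l, r), ⟨trivial, ?_, ?_⟩, rfl⟩ <;>
      · simp only [Set.mem_ofPred_eq]
        omega

/-- The position of the bud of an inner node of a blossom tree relative to its two subtrees. -/
inductive BudPosition : Type
  | first
  | middle
  | last

namespace BudPosition

instance : Finite BudPosition :=
  Set.finite_univ_iff.1 <| (Set.toFinite {first, middle, last}).subset fun p _ => by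
    cases p <;> simp

/-- The number of buds met before the left subtree. -/
def leftShift : BudPosition → ℤ
  | first => 1
  | middle => 0
  | last => 0

/-- The number of buds met before the right subtree, minus one for the left subtree, which has one
more leaf than buds. -/
def rightShift : BudPosition → ℤ
  | first => 0
  | middle => 0
  | last => -1

/-- The position of the bud seen from the left subtree, the former root edge coming last. -/
def fromLeft : BudPosition → BudPosition
  | first => last
  | middle => first
  | last => middle

theorem leftShift_nonneg (p : BudPosition) : 0 ≤ p.leftShift := by
  cases p <;> simp [leftShift]

theorem leftShift_fromLeft (p : BudPosition) :
    p.fromLeft.leftShift = p.rightShift - p.leftShift + 1 := by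
  cases p <;> rfl

theorem rightShift_fromLeft (p : BudPosition) : p.fromLeft.rightShift = -p.leftShift := by
  cases p <;> rfl

end BudPosition

/-- Blossom trees: planted binary trees in which each inner node carries a bud. The root edge ends
in a leaf which is not represented, so that a tree with `n` inner nodes has `n + 2` leaves. -/
abbrev BlossomTree : Type := BinaryTree BudPosition

namespace BlossomTree

open BudPosition

/-- Glue the root edges of `t` and `s` together and root the result at the first leaf of `t`. -/
def rerootOnto : BlossomTree → BlossomTree → BlossomTree
  | .nil, s => s
  | .node p l r, s => rerootOnto l (.node p.fromLeft r s)

/-- Move the root to the next leaf of the contour. -/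
def reroot (t : BlossomTree) : BlossomTree := rerootOnto t .nil

theorem numNodes_rerootOnto (t s : BlossomTree) :
    (rerootOnto t s).numNodes = t.numNodes + s.numNodes := by
  induction t generalizing s with
  | nil => simp [rerootOnto]
  | node p l r ihl =>
    simp only [rerootOnto, ihl, BinaryTree.numNodes]
    omega

theorem numNodes_iterate_reroot (t : BlossomTree) (k : ℕ) :
    (reroot^[k] t).numNodes = t.numNodes := by
  induction k with
  | zero => rfl
  | succ k ih => rw [Function.iterate_succ_apply', reroot, numNodes_rerootOnto, ih]; rfl

-- The root travels through the `t.numNodes + 1` leaves of `t`, then enters `s`.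
theorem iterate_reroot_rerootOnto (t s : BlossomTree) :
    reroot^[t.numNodes + 1] (rerootOnto t s) = rerootOnto s t := by
  induction t generalizing s with
  | nil => rfl
  | node p l r ihl ihr =>
    have hlen : (BinaryTree.node p l r).numNodes + 1 = (r.numNodes + 1) + (l.numNodes + 1) := by
      simp only [BinaryTree.numNodes]
      omega
    have hcycle : p.fromLeft.fromLeft.fromLeft = p := by cases p <;> rfl
    rw [hlen, Function.iterate_add_apply, rerootOnto, ihl, rerootOnto, ihr, rerootOnto, hcycle]

theorem iterate_reroot_iterate_reroot {t : BlossomTree} {i j : ℕ} (hij : i + j = t.numNodes + 2) :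
    reroot^[i] (reroot^[j] t) = t := by
  rw [← Function.iterate_add_apply, hij]
  exact iterate_reroot_rerootOnto t .nil

/-- The heights of the leaves of `t`, root leaf excluded, in contour order starting from height
`v`: a bud raises the height by one and a leaf lowers it by one. -/
def heights : ℤ → BlossomTree → List ℤ
  | v, .nil => [v]
  | v, .node p l r => heights (v + p.leftShift) l ++ heights (v + p.rightShift) r

theorem length_heights (v : ℤ) (t : BlossomTree) : (heights v t).length = t.numNodes + 1 := by
  induction t generalizing v with
  | nil => rfl
  | node p l r ihl ihr =>
    simp only [heights, List.length_append, ihl, ihr, BinaryTree.numNodes]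
    omega

theorem heights_add (v w : ℤ) (t : BlossomTree) :
    heights (v + w) t = (heights v t).map (· + w) := by
  induction t generalizing v with
  | nil => rfl
  | node p l r ihl ihr =>
    simp only [heights, List.map_append, ← ihl, ← ihr, add_right_comm v w]

theorem self_mem_heights (v : ℤ) (t : BlossomTree) : v ∈ heights v t := by
  induction t generalizing v with
  | nil => simp [heights]
  | node p l r ihl ihr =>
    have hshift : p.leftShift = 0 ∨ p.rightShift = 0 := by
      cases p <;> simp [leftShift, rightShift]
    rcases hshift with h | h
    · simp [heights, h, ihl]
    · simp [heights, h, ihr]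

theorem heights_rerootOnto (t s : BlossomTree) (v w : ℤ) :
    ∃ x xs, heights v t = x :: xs ∧
      heights w (rerootOnto t s) = (xs ++ heights (v - 1) s).map (· + (w + 1 - x)) := by
  induction t generalizing s v with
  | nil =>
    refine ⟨v, [], rfl, ?_⟩
    rw [List.nil_append, ← heights_add, rerootOnto]
    congr 1
    ring
  | node p l r ihl =>
    obtain ⟨x, xs, hl, hreroot⟩ := ihl (.node p.fromLeft r s) (v + p.leftShift)
    refine ⟨x, xs ++ heights (v + p.rightShift) r, by simp [heights, hl], ?_⟩
    have hr : v + p.leftShift - 1 + p.fromLeft.leftShift = v + p.rightShift := by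
      rw [leftShift_fromLeft]
      ring
    have hs : v + p.leftShift - 1 + p.fromLeft.rightShift = v - 1 := by
      rw [rightShift_fromLeft]
      ring
    rw [rerootOnto, hreroot, heights, hr, hs, List.append_assoc]

theorem mem_of_heights_eq_append_cons {t : BlossomTree} {v x y : ℤ} {a b : List ℤ}
    (h : heights v t = a ++ x :: b) (hxy : x < y) (hyv : y ≤ v) : y ∈ a := by
  induction t generalizing v a b with
  | nil =>
    obtain ⟨rfl, hx⟩ : a = [] ∧ v = x := by cases a <;> simp_all [heights]
    omega
  | node p l r ihl ihr =>
    rcases append_eq_append_cons_cases h with ⟨c, hl⟩ | ⟨a', rfl, hr⟩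
    · exact ihl hl (by have := p.leftShift_nonneg; omega)
    · rw [List.mem_append]
      by_cases hy : y ≤ v + p.rightShift
      · exact .inr (ihr hr hy)
      · have hyv : v + p.leftShift = y := by
          cases p <;> simp only [leftShift, rightShift] at hy ⊢ <;> omega
        exact .inl (hyv ▸ self_mem_heights _ l)

/-- The heights of all leaves of `t`, the root leaf coming last. -/
def contour (t : BlossomTree) : List ℤ := heights 1 t ++ [0]

theorem length_contour (t : BlossomTree) : (contour t).length = t.numNodes + 2 := by
  simp [contour, length_heights]

theorem contour_reroot {t : BlossomTree} {x : ℤ} {b : List ℤ} (h : contour t = x :: b) :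
    contour (reroot t) = b.map (· + (2 - x)) ++ [0] := by
  obtain ⟨y, ys, hy, hreroot⟩ := heights_rerootOnto t .nil 1 1
  rw [contour, hy, List.cons_append, List.cons.injEq] at h
  obtain ⟨rfl, rfl⟩ := h
  rw [contour, reroot, hreroot]
  simp [heights]

-- Each turn around the tree lowers the contour by two, the number of leaves minus that of buds.
theorem heights_iterate_reroot {t : BlossomTree} {x : ℤ} {a b : List ℤ}
    (h : contour t = a ++ x :: b) :
    heights 1 (reroot^[a.length + 1] t) = b.map (· + (2 - x)) ++ a.map (· - x) := by
  suffices hcontour : contour (reroot^[a.length + 1] t) =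
      b.map (· + (2 - x)) ++ a.map (· - x) ++ [0] from List.append_cancel_right hcontour
  induction a using List.reverseRecOn generalizing x b with
  | nil => simpa using contour_reroot h
  | append_singleton a z ih =>
    have hz := ih (x := z) (b := x :: b) (by simp [h])
    rw [List.length_append, List.length_singleton, Function.iterate_succ_apply',
      contour_reroot hz]
    have hz_sub : 2 - (x + (2 - z)) = z - x := by ring
    have hb : ∀ y : ℤ, y + (2 - z) + (z - x) = y + (2 - x) := fun y => by ring
    simp [Function.comp_def, hz_sub, hb]

theorem mem_of_contour_eq_append_cons {t : BlossomTree} {x y : ℤ} {a b : List ℤ}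
    (h : contour t = a ++ x :: b) (hxy : x < y) (hy : y ≤ 1) : y ∈ a := by
  rcases append_eq_append_cons_cases h with ⟨c, hc⟩ | ⟨a', rfl, hroot⟩
  · exact mem_of_heights_eq_append_cons hc hxy hy
  · obtain ⟨rfl, hx⟩ : a' = [] ∧ 0 = x := by cases a' <;> simp_all
    obtain rfl : y = 1 := by omega
    simpa using self_mem_heights 1 t

/-- Balanced blossom trees, which encode the well labelled trees. -/
def IsBalanced (t : BlossomTree) : Prop := ∀ v ∈ heights 1 t, 1 ≤ v

theorem isBalanced_iterate_reroot_iff {t : BlossomTree} {x : ℤ} {a b : List ℤ}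
    (h : contour t = a ++ x :: b) :
    IsBalanced (reroot^[a.length + 1] t) ↔ (∀ y ∈ a, x < y) ∧ ∀ y ∈ b, x < y + 2 := by
  simp only [IsBalanced, heights_iterate_reroot h, List.forall_mem_append, List.forall_mem_map]
  rw [and_comm]
  exact and_congr (forall₂_congr fun y _ => by omega) (forall₂_congr fun y _ => by omega)

theorem isBalanced_iterate_reroot_iff_isRecordCut {t : BlossomTree} {j : ℕ}
    (hj : j < t.numNodes + 2) :
    IsBalanced (reroot^[j + 1] t) ↔
      IsRecordCut (Finset.range (t.numNodes + 2)) ((contour t).getD · 0) 2 j := by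
  have hlen := length_contour t
  have hsplit := eq_take_append_getD_cons_drop (hlen ▸ hj) (0 : ℤ)
  have htake : ((contour t).take j).length = j := List.length_take_of_le (by omega)
  have hiff := isBalanced_iterate_reroot_iff hsplit
  rw [htake, forall_mem_take_iff_getD (by omega) 0, forall_mem_drop_iff_getD _ _ 0, hlen] at hiff
  rw [hiff, IsRecordCut]
  simp only [Finset.mem_range, Nat.cast_ofNat, Nat.succ_le_iff]
  exact and_congr (forall_congr' fun i => ⟨fun h _ => h, fun h hi => h (by omega) hi⟩)
    (forall_congr' fun i => ⟨fun h h₁ h₂ => h h₂ h₁, fun h h₁ h₂ => h h₂ h₁⟩)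

theorem card_isBalanced_iterate_reroot (t : BlossomTree) :
    ((Finset.range (t.numNodes + 2)).filter fun j => IsBalanced (reroot^[j + 1] t)).card = 2 := by
  have hlen := length_contour t
  rw [Finset.filter_congr fun j hj =>
    isBalanced_iterate_reroot_iff_isRecordCut (Finset.mem_range.1 hj)]
  refine card_isRecordCut (c := 1) two_pos ⟨t.numNodes + 1, by simp, ?_⟩ fun j hj y hjy hy => ?_
  · simp [contour, length_heights]
  · have hj : j < (contour t).length := hlen ▸ Finset.mem_range.1 hj
    have hmem := mem_of_contour_eq_append_cons (eq_take_append_getD_cons_drop hj 0) hjy hy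
    obtain ⟨i, hi, rfl⟩ := List.mem_take_iff_getElem.1 hmem
    rw [lt_min_iff] at hi
    exact ⟨i, Finset.mem_range.2 (hlen ▸ hi.2), hi.1, List.getD_eq_getElem _ _ hi.2⟩

/-- The forest hanging from a vertex with label `v`. The position of the bud is the label increment
along the edge to the first child; the left subtree encodes the descendants of that child, except
for `.last`, where the two subtrees are exchanged so that labels agree with heights. -/
def forest : ℤ → BlossomTree → List LTree
  | _, .nil => []
  | v, .node .first l r => .node (v + 1) (forest (v + 1) l) :: forest v r
  | v, .node .middle l r => .node v (forest v l) :: forest v r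
  | v, .node .last l r => .node (v - 1) (forest (v - 1) r) :: forest v l

/-- The embedded tree encoded by a blossom tree. -/
def toLTree (t : BlossomTree) : LTree := .node 1 (forest 1 t)

theorem goodL_forest (v : ℤ) (t : BlossomTree) : LTree.GoodL v (forest v t) := by
  induction t generalizing v with
  | nil => trivial
  | node p l r ihl ihr =>
    cases p <;> simp [forest, LTree.GoodL, LTree.Good, LTree.label, ihl, ihr]

theorem numEdgesL_forest (v : ℤ) (t : BlossomTree) :
    LTree.numEdgesL (forest v t) = t.numNodes := by
  induction t generalizing v with
  | nil => rfl
  | node p l r ihl ihr =>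
    cases p <;> simp only [forest, LTree.numEdgesL, LTree.numEdges, ihl, ihr,
      BinaryTree.numNodes] <;> omega

theorem cons_labelsL_forest (v : ℤ) (t : BlossomTree) :
    v ::ₘ LTree.labelsL (forest v t) = heights v t := by
  induction t generalizing v with
  | nil => rfl
  | node p l r ihl ihr =>
    rw [heights, ← Multiset.coe_add, ← ihl, ← ihr]
    cases p <;> simp only [forest, LTree.labelsL, LTree.labels, leftShift, rightShift, add_zero,
      ← sub_eq_add_neg, ← Multiset.singleton_add] <;> abel

theorem forest_injective (v : ℤ) : Function.Injective (forest v) := by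
  intro t s h
  induction t generalizing v s with
  | nil => rcases s with _ | ⟨_ | _ | _⟩ <;> simp [forest] at h ⊢
  | node p l r ihl ihr =>
    rcases s with _ | ⟨q, l', r'⟩
    · cases p <;> simp [forest] at h
    · obtain rfl : p = q := by
        cases p <;> cases q <;> first
          | rfl
          | simp only [forest, List.cons.injEq, LTree.node.injEq] at h
            omega
      cases p <;> simp only [forest, List.cons.injEq, LTree.node.injEq, true_and] at h
      · rw [ihl _ h.1, ihr _ h.2]
      · rw [ihl _ h.1, ihr _ h.2]
      · rw [ihl _ h.2, ihr _ h.1]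

theorem exists_forest_eq : ∀ {v : ℤ} {ts : List LTree}, LTree.GoodL v ts → ∃ t, forest v t = ts
  | _, [], _ => ⟨.nil, rfl⟩
  | v, .node w us :: ts, ⟨hwv, hus, hts⟩ => by
    obtain ⟨l, rfl⟩ := exists_forest_eq hus
    obtain ⟨r, rfl⟩ := exists_forest_eq hts
    have hw : w = v + 1 ∨ w = v ∨ w = v - 1 := by
      rw [LTree.label, abs_le] at hwv
      omega
    rcases hw with rfl | rfl | rfl
    · exact ⟨.node .first l r, rfl⟩
    · exact ⟨.node .middle l r, rfl⟩
    · exact ⟨.node .last r l, rfl⟩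

theorem labels_toLTree (t : BlossomTree) : (toLTree t).labels = heights 1 t :=
  cons_labelsL_forest 1 t

theorem countLE_toLTree (t : BlossomTree) (y : ℤ) :
    (toLTree t).countLE y = (heights 1 t).countP (· ≤ y) := by
  rw [LTree.countLE, labels_toLTree, ← Multiset.countP_eq_card_filter, Multiset.coe_countP]

theorem toLTree_injective : Function.Injective toLTree := fun _ _ h =>
  forest_injective 1 (LTree.node.inj h).2

theorem toLTree_mem_embTrees (t : BlossomTree) : toLTree t ∈ EmbTrees t.numNodes :=
  ⟨goodL_forest 1 t, rfl, numEdgesL_forest 1 t⟩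

theorem exists_toLTree_eq {n : ℕ} {U : LTree} (hU : U ∈ EmbTrees n) :
    ∃ t, t.numNodes = n ∧ toLTree t = U := by
  obtain ⟨v, ts⟩ := U
  obtain ⟨hgood, rfl, rfl⟩ := hU
  obtain ⟨t, rfl⟩ := exists_forest_eq hgood
  exact ⟨t, (numEdgesL_forest _ t).symm, rfl⟩

theorem toLTree_mem_wlTrees_iff (t : BlossomTree) :
    toLTree t ∈ WLTrees t.numNodes ↔ IsBalanced t := by
  obtain ⟨hgood, hroot, hedges⟩ := toLTree_mem_embTrees t
  simp only [WLTrees, Set.mem_ofPred_eq, hgood, hroot, hedges, labels_toLTree, Multiset.mem_coe,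
    IsBalanced, true_and, and_true]

theorem exists_numNodes_eq (n : ℕ) : ∃ t : BlossomTree, t.numNodes = n := by
  induction n with
  | zero => exact ⟨.nil, rfl⟩
  | succ n ih =>
    obtain ⟨t, rfl⟩ := ih
    exact ⟨.node .first .nil t, by simp⟩

/-- The sample space of the coupling: a blossom tree with `n` inner nodes together with (the index
in its contour of) a leaf at which rerooting it yields a balanced tree. -/
noncomputable def couplingSpace (n : ℕ) : Finset (BlossomTree × ℕ) :=
  ((finite_setOf_numNodes_le BudPosition n).toFinset ×ˢ Finset.range (n + 2)).filter fun q =>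
    q.1.numNodes = n ∧ IsBalanced (reroot^[q.2 + 1] q.1)

theorem mem_couplingSpace {n : ℕ} {q : BlossomTree × ℕ} : q ∈ couplingSpace n ↔
    q.1.numNodes = n ∧ q.2 < n + 2 ∧ IsBalanced (reroot^[q.2 + 1] q.1) := by
  simp only [couplingSpace, Finset.mem_filter, Finset.mem_product, Set.Finite.mem_toFinset,
    Set.mem_ofPred_eq, Finset.mem_range]
  exact ⟨fun ⟨⟨_, hj⟩, hn, hbal⟩ => ⟨hn, hj, hbal⟩,
    fun ⟨hn, hj, hbal⟩ => ⟨⟨hn.le, hj⟩, hn, hbal⟩⟩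

theorem card_filter_fst_eq (t : BlossomTree) :
    ((couplingSpace t.numNodes).filter fun q => q.1 = t).card = 2 := by
  have hfiber : (couplingSpace t.numNodes).filter (fun q => q.1 = t) =
      ((Finset.range (t.numNodes + 2)).filter fun j => IsBalanced (reroot^[j + 1] t)).image
        (Prod.mk t) := by
    ext ⟨s, j⟩
    simp only [Finset.mem_filter, mem_couplingSpace, Finset.mem_image, Finset.mem_range,
      Prod.mk.injEq, exists_eq_right_right]
    constructor
    · rintro ⟨⟨-, hj, hbal⟩, rfl⟩
      exact ⟨⟨hj, hbal⟩, rfl⟩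
    · rintro ⟨⟨hj, hbal⟩, rfl⟩
      exact ⟨⟨rfl, hj, hbal⟩, rfl⟩
  rw [hfiber, Finset.card_image_of_injective _ (Prod.mk_right_injective t),
    card_isBalanced_iterate_reroot]

theorem card_filter_iterate_reroot_eq {s : BlossomTree} (hs : IsBalanced s) :
    ((couplingSpace s.numNodes).filter fun q => reroot^[q.2 + 1] q.1 = s).card =
      s.numNodes + 2 := by
  have hfiber : (couplingSpace s.numNodes).filter (fun q => reroot^[q.2 + 1] q.1 = s) =
      (Finset.range (s.numNodes + 2)).image fun j => (reroot^[s.numNodes + 1 - j] s, j) := by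
    ext ⟨t, j⟩
    simp only [Finset.mem_filter, mem_couplingSpace, Finset.mem_image, Finset.mem_range,
      Prod.mk.injEq, exists_eq_right_right]
    constructor
    · rintro ⟨⟨hn, hj, -⟩, hts⟩
      refine ⟨hj, ?_⟩
      rw [← hn, ← hts]
      exact iterate_reroot_iterate_reroot (by omega)
    · rintro ⟨hj, hst⟩
      have hts : reroot^[j + 1] t = s := hst ▸ iterate_reroot_iterate_reroot (by omega)
      exact ⟨⟨hst ▸ numNodes_iterate_reroot s _, hj, hts.symm ▸ hs⟩, hts⟩
  rw [hfiber, Finset.card_image_of_injective _ fun i j h => (Prod.mk.inj h).2, Finset.card_range]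

theorem toLTree_iterate_reroot_mem_wlTrees {n : ℕ} {q : BlossomTree × ℕ}
    (hq : q ∈ couplingSpace n) : toLTree (reroot^[q.2 + 1] q.1) ∈ WLTrees n := by
  obtain ⟨rfl, -, hbal⟩ := mem_couplingSpace.1 hq
  rw [← numNodes_iterate_reroot q.1 (q.2 + 1)]
  exact (toLTree_mem_wlTrees_iff _).2 hbal

theorem toLTree_fst_mem_embTrees {n : ℕ} {q : BlossomTree × ℕ} (hq : q ∈ couplingSpace n) :
    toLTree q.1 ∈ EmbTrees n :=
  (mem_couplingSpace.1 hq).1 ▸ toLTree_mem_embTrees q.1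

theorem couplingSpace_nonempty (n : ℕ) : (couplingSpace n).Nonempty := by
  obtain ⟨t, rfl⟩ := exists_numNodes_eq n
  exact (Finset.card_pos.1 (by rw [card_filter_fst_eq]; exact two_pos)).mono
    (Finset.filter_subset (fun q => q.1 = t) _)

theorem card_filter_toLTree_fst_eq {n : ℕ} {U : LTree} (hU : U ∈ EmbTrees n) :
    ((couplingSpace n).filter fun q => toLTree q.1 = U).card = 2 := by
  obtain ⟨t, rfl, rfl⟩ := exists_toLTree_eq hU
  simp only [toLTree_injective.eq_iff, card_filter_fst_eq]

theorem card_filter_toLTree_iterate_reroot_eq {n : ℕ} {W : LTree} (hW : W ∈ WLTrees n) :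
    ((couplingSpace n).filter fun q => toLTree (reroot^[q.2 + 1] q.1) = W).card = n + 2 := by
  obtain ⟨s, rfl, rfl⟩ := exists_toLTree_eq ⟨hW.1, hW.2.2⟩
  simp only [toLTree_injective.eq_iff,
    card_filter_iterate_reroot_eq ((toLTree_mem_wlTrees_iff s).1 hW)]

section CountBounds

variable {t : BlossomTree} {x : ℤ} {a b : List ℤ}

theorem countLE_toLTree_add (h : contour t = a ++ x :: b) (y : ℤ) :
    (toLTree t).countLE y + (if 0 ≤ y then 1 else 0) =
      a.countP (· ≤ y) + b.countP (· ≤ y) + if x ≤ y then 1 else 0 := by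
  have hcount := congrArg (List.countP (· ≤ y)) h
  simp only [contour, List.countP_append, List.countP_cons, List.countP_nil, decide_eq_true_eq]
    at hcount
  rw [countLE_toLTree]
  omega

theorem countLE_toLTree_iterate_reroot (h : contour t = a ++ x :: b) (y : ℤ) :
    (toLTree (reroot^[a.length + 1] t)).countLE y =
      b.countP (· ≤ y + x - 2) + a.countP (· ≤ y + x) := by
  rw [countLE_toLTree, heights_iterate_reroot h, List.countP_append, List.countP_map,
    List.countP_map]
  congr 2 <;> funext v <;> simp only [Function.comp_apply, decide_eq_decide] <;> omega

theorem minLabel_sub_one_le (h : contour t = a ++ x :: b) : (toLTree t).minLabel - 1 ≤ x := by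
  have hmin : ∀ v ∈ heights 1 t, (toLTree t).minLabel ≤ v := fun v hv =>
    (toLTree t).isLeast_minLabel.2 (by simpa [labels_toLTree] using hv)
  have hx : x ∈ contour t := by simp [h]
  rcases List.mem_append.1 hx with hx | hx
  · linarith [hmin x hx]
  · linarith [hmin 1 (self_mem_heights 1 t), List.mem_singleton.1 hx]

theorem le_minLabel_add_one (h : contour t = a ++ x :: b)
    (hbal : IsBalanced (reroot^[a.length + 1] t)) : x ≤ (toLTree t).minLabel + 1 := by
  obtain ⟨ha, hb⟩ := (isBalanced_iterate_reroot_iff h).1 hbal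
  have hm : (toLTree t).minLabel ∈ contour t := by
    have := (toLTree t).isLeast_minLabel.1
    rw [labels_toLTree] at this
    exact List.mem_append_left _ this
  rw [h, List.mem_append, List.mem_cons] at hm
  rcases hm with hm | hm | hm
  · linarith [ha _ hm]
  · linarith
  · linarith [hb _ hm]

theorem countLE_toLTree_le_countLE_iterate_reroot (h : contour t = a ++ x :: b)
    {k : ℤ} (hk : 1 ≤ k) :
    (toLTree t).countLE ((toLTree t).minLabel + (k - 2) - 1) ≤
      (toLTree (reroot^[a.length + 1] t)).countLE k := by
  have hx := minLabel_sub_one_le h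
  set y := (toLTree t).minLabel + (k - 2) - 1
  have hcount := countLE_toLTree_add h y
  have hb := countP_le_mono b (show y ≤ k + x - 2 by omega)
  have ha := countP_le_mono a (show y ≤ k + x by omega)
  rw [countLE_toLTree_iterate_reroot h]
  by_cases hxy : x ≤ y ∧ y < 0
  · -- The leaf `x` is counted in `t` but the root leaf is not; a leaf of `a` makes up for it.
    have hmem : min (k + x) 1 ∈ a := mem_of_contour_eq_append_cons h (by omega) (by omega)
    have hlt := countP_le_lt_countP_le hmem (show y < min (k + x) 1 by omega) (min_le_left _ _)
    split_ifs at hcount <;> omega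
  · split_ifs at hcount <;> omega

theorem countLE_iterate_reroot_le_countLE_toLTree (h : contour t = a ++ x :: b)
    (hbal : IsBalanced (reroot^[a.length + 1] t)) {k : ℤ} (hk : 1 ≤ k) :
    (toLTree (reroot^[a.length + 1] t)).countLE k ≤
      (toLTree t).countLE ((toLTree t).minLabel + (k + 2) - 1) := by
  have hx := le_minLabel_add_one h hbal
  set y := (toLTree t).minLabel + (k + 2) - 1
  have hcount := countLE_toLTree_add h y
  have hb := countP_le_mono b (show k + x - 2 ≤ y by omega)
  have ha := countP_le_mono a (show k + x ≤ y by omega)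
  rw [countLE_toLTree_iterate_reroot h]
  rw [if_pos (show x ≤ y by omega)] at hcount
  split_ifs at hcount <;> omega

end CountBounds

theorem countLE_bounds_of_mem_couplingSpace {n : ℕ} {q : BlossomTree × ℕ}
    (hq : q ∈ couplingSpace n) {k : ℤ} (hk : 1 ≤ k) :
    (toLTree q.1).countLE ((toLTree q.1).minLabel + (k - 2) - 1) ≤
        (toLTree (reroot^[q.2 + 1] q.1)).countLE k ∧
      (toLTree (reroot^[q.2 + 1] q.1)).countLE k ≤
        (toLTree q.1).countLE ((toLTree q.1).minLabel + (k + 2) - 1) := by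
  obtain ⟨t, j⟩ := q
  obtain ⟨rfl, hj, hbal⟩ := mem_couplingSpace.1 hq
  rw [← length_contour] at hj
  have hsplit := eq_take_append_getD_cons_drop hj 0
  have htake : ((contour t).take j).length = j := List.length_take_of_le hj.le
  rw [← htake] at hbal ⊢
  exact ⟨countLE_toLTree_le_countLE_iterate_reroot hsplit hk,
    countLE_iterate_reroot_le_countLE_toLTree hsplit hbal hk⟩

theorem abs_maxLabel_sub_le_of_mem_couplingSpace {n : ℕ} {q : BlossomTree × ℕ}
    (hq : q ∈ couplingSpace n) :
    |(toLTree (reroot^[q.2 + 1] q.1)).maxLabel -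
      ((toLTree q.1).maxLabel - (toLTree q.1).minLabel)| ≤ 3 := by
  have hcard : (toLTree (reroot^[q.2 + 1] q.1)).labels.card = (toLTree q.1).labels.card := by
    simp only [labels_toLTree, Multiset.coe_card, length_heights, numNodes_iterate_reroot]
  have hpos : ∀ v ∈ (toLTree (reroot^[q.2 + 1] q.1)).labels, 1 ≤ v :=
    (toLTree_iterate_reroot_mem_wlTrees hq).2.1
  exact LTree.abs_maxLabel_sub_le zero_le_two hcard (hpos _ (LTree.isGreatest_maxLabel _).1)
    fun k hk => countLE_bounds_of_mem_couplingSpace hq hk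

end BlossomTree

/-- Coupling of well labelled and embedded trees: there is a joint distribution
on pairs `(W, U)` whose marginals are uniform on well labelled trees and on
embedded trees with `n` edges, such that on its support the cumulated label
distributions satisfy `Λ̂_{k-2}(U) ≤ λ̂_k(W) ≤ Λ̂_{k+2}(U)` for all `k ≥ 1`
(where `Λ̂_j(U)` counts labels at most `minLabel U + j - 1` and `λ̂_k(W)` counts
labels at most `k`), and in particular `|μ(W) - (M(U) - m(U))| ≤ 3`. -/
theorem coupling_wellLabelled_embedded (n : ℕ) :
    ∃ (S : Finset (LTree × LTree)) (p : LTree × LTree → ℚ),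
      (∀ x ∈ S, 0 < p x) ∧ (∑ x ∈ S, p x = 1) ∧
      (∀ x ∈ S, x.1 ∈ WLTrees n ∧ x.2 ∈ EmbTrees n) ∧
      (∀ W ∈ WLTrees n,
        ∑ x ∈ S.filter (fun x => x.1 = W), p x = ((WLTrees n).ncard : ℚ)⁻¹) ∧
      (∀ U ∈ EmbTrees n,
        ∑ x ∈ S.filter (fun x => x.2 = U), p x = ((EmbTrees n).ncard : ℚ)⁻¹) ∧
      ∀ x ∈ S,
        (∀ k : ℕ, 1 ≤ k →
          x.2.countLE (x.2.minLabel + ((k : ℤ) - 2) - 1) ≤ x.1.countLE (k : ℤ) ∧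
            x.1.countLE (k : ℤ) ≤ x.2.countLE (x.2.minLabel + ((k : ℤ) + 2) - 1)) ∧
        |x.1.maxLabel - (x.2.maxLabel - x.2.minLabel)| ≤ 3 := by
  obtain ⟨S, p, hpos, hsum, himage, hmarginalW, hmarginalU⟩ := exists_coupling_of_card_fiber_eq
    (BlossomTree.couplingSpace_nonempty n) (Nat.succ_ne_zero (n + 1)) two_ne_zero
    (fun _ hq => BlossomTree.toLTree_iterate_reroot_mem_wlTrees hq)
    (fun _ hq => BlossomTree.toLTree_fst_mem_embTrees hq)
    (fun _ hW => BlossomTree.card_filter_toLTree_iterate_reroot_eq hW)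
    (fun _ hU => BlossomTree.card_filter_toLTree_fst_eq hU)
  refine ⟨S, p, hpos, hsum, fun x hx => ?_, hmarginalW, hmarginalU, fun x hx => ?_⟩ <;>
    obtain ⟨q, hq, rfl⟩ := himage x hx
  · exact ⟨BlossomTree.toLTree_iterate_reroot_mem_wlTrees hq,
      BlossomTree.toLTree_fst_mem_embTrees hq⟩
  · exact ⟨fun k hk => BlossomTree.countLE_bounds_of_mem_couplingSpace hq (by exact_mod_cast hk),
      BlossomTree.abs_maxLabel_sub_le_of_mem_couplingSpace hq⟩
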